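/- Let d ≥ 5 and n ≥ 4. HAT is irreducible on the equivalence classes of non-isolated n-element configurations: for any non-isolated n-element configurations U, V ⊂ Z^d there exists t ≥ 0 such that P_U(Û_t = V̂) > 0. -/

import Mathlib

open MeasureTheory

namespace HATFormal

/-- Points of the lattice `ℤ^d`. -/
abbrev Pt (d : ℕ) := Fin d → ℤ

/-- The `2d` unit steps of the simple random walk on `ℤ^d`. -/
def Dir (d : ℕ) : Set (Pt d) :=
  {s | ∃ i : Fin d, s = Pi.single i 1 ∨ s = Pi.single i (-1)}

/-- The position, after `t` steps, of the walk started at `x` with steps `s`. -/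
def wpos (d : ℕ) (x : Pt d) {T : ℕ} (s : Fin T → Pt d) (t : ℕ) : Pt d :=
  x + ∑ i ∈ Finset.univ.filter (fun i : Fin T => (i : ℕ) < t), s i

/-- The probability of an event `P` of the first `T` steps of simple random walk on `ℤ^d`. -/
noncomputable def prob (d T : ℕ) (P : (Fin T → Pt d) → Prop) : ℝ :=
  (Nat.card {s : Fin T → Pt d // (∀ i, s i ∈ Dir d) ∧ P s} : ℝ) / ((2 * d : ℕ) : ℝ) ^ T

open Classical in
/-- `esc d A x = P_x(τ_A = ∞)` if `x ∈ A`, and `0` otherwise. -/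
noncomputable def esc (d : ℕ) (A : Set (Pt d)) (x : Pt d) : ℝ :=
  if x ∈ A then ⨅ T : ℕ, prob d T (fun s => ∀ t, 1 ≤ t → t ≤ T → wpos d x s t ∉ A) else 0

/-- The capacity of `A`. -/
noncomputable def capa (d : ℕ) (A : Set (Pt d)) : ℝ := ∑' x : A, esc d A (x : Pt d)

/-- The harmonic measure `H_A(x) = esc_A(x) / cap_A`. -/
noncomputable def harm (d : ℕ) (A : Set (Pt d)) (x : Pt d) : ℝ := esc d A x / capa d A

/-- `P_x(τ_W < ∞)`. -/
noncomputable def retProb (d : ℕ) (W : Set (Pt d)) (x : Pt d) : ℝ :=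
  ∑' t : ℕ, prob d t (fun s => 1 ≤ t ∧ wpos d x s t ∈ W ∧
    ∀ u, 1 ≤ u → u < t → wpos d x s u ∉ W)

/-- `P_x(τ_W < ∞ and S_{τ_W − 1} = y)`. -/
noncomputable def hitFrom (d : ℕ) (W : Set (Pt d)) (x y : Pt d) : ℝ :=
  ∑' t : ℕ, prob d t (fun s => 1 ≤ t ∧ wpos d x s t ∈ W ∧ wpos d x s (t - 1) = y ∧
    ∀ u, 1 ≤ u → u < t → wpos d x s u ∉ W)

/-- `P_x(τ_W < ∞ and S_{τ_W} ∈ T)`. -/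
noncomputable def firstHitIn (d : ℕ) (W T : Set (Pt d)) (x : Pt d) : ℝ :=
  ∑' t : ℕ, prob d t (fun s => 1 ≤ t ∧ wpos d x s t ∈ W ∧ wpos d x s t ∈ T ∧
    ∀ u, 1 ≤ u → u < t → wpos d x s u ∉ W)

/-- `P_x(S_{τ_W − 1} = y ∣ τ_W < ∞)`. -/
noncomputable def transP (d : ℕ) (W : Set (Pt d)) (x y : Pt d) : ℝ :=
  hitFrom d W x y / retProb d W x

/-- The Green's function of simple random walk on `ℤ^d`. -/
noncomputable def green (d : ℕ) (x : Pt d) : ℝ :=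
  ∑' t : ℕ, prob d t (fun s => wpos d x s t = 0)

/-- Configurations: finite subsets of `ℤ^d`. -/
abbrev Conf (d : ℕ) := Finset (Pt d)

/-- `p_U(x, y)`, the probability that HAT activates at `x` and transports to `y`. -/
noncomputable def pHAT (d : ℕ) (U : Conf d) (x y : Pt d) : ℝ :=
  harm d (↑U) x * transP d ((↑U : Set (Pt d)) \ {x}) x y

open Classical in
/-- The transition probabilities of HAT. -/
noncomputable def hatProb (d : ℕ) (U V : Conf d) : ℝ :=
  if V = U then ∑' z : Pt d, pHAT d U z z
  else ∑' x : Pt d, ∑' y : Pt d,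
    if x ∈ U ∧ x ≠ y ∧ V = insert y (U.erase x) then pHAT d U x y else 0

instance (d : ℕ) : MeasurableSpace (Conf d) := ⊤

/-- `μ` is the law of HAT started from `U`. -/
def IsHATLaw (d : ℕ) (U : Conf d) (μ : Measure (ℕ → Conf d)) : Prop :=
  IsProbabilityMeasure μ ∧
  ∀ (t : ℕ) (u : ℕ → Conf d),
    μ {ω | ∀ s ≤ t, ω s = u s} =
      (if u 0 = U then 1 else 0) *
        ∏ s ∈ Finset.range t, ENNReal.ofReal (hatProb d (u s) (u (s + 1)))

/-- A signed permutation plus translation of `ℤ^d`. -/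
def SymImage (d : ℕ) (σ : Equiv.Perm (Fin d)) (ε : Fin d → ℤ) (v : Pt d) (x : Pt d) : Pt d :=
  fun i => v i + ε i * x (σ i)

/-- `SymEq d U V` holds when `V = gU` for a symmetry `g` of `ℤ^d`. -/
def SymEq (d : ℕ) (U V : Conf d) : Prop :=
  ∃ (σ : Equiv.Perm (Fin d)) (ε : Fin d → ℤ) (v : Pt d),
    (∀ i, ε i = 1 ∨ ε i = -1) ∧ V = U.image (SymImage d σ ε v)

/-- Euclidean distance on `ℤ^d`. -/
noncomputable def dist0 (d : ℕ) (x y : Pt d) : ℝ :=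
  Real.sqrt (∑ i, ((x i : ℝ) - (y i : ℝ)) ^ 2)

/-- Euclidean distance between finite subsets of `ℤ^d`. -/
noncomputable def setDist (d : ℕ) (A B : Finset (Pt d)) : ℝ :=
  sInf {r : ℝ | ∃ x ∈ A, ∃ y ∈ B, r = dist0 d x y}

/-- Euclidean diameter of a finite subset of `ℤ^d`. -/
noncomputable def diam0 (d : ℕ) (A : Finset (Pt d)) : ℝ :=
  sSup {r : ℝ | ∃ x ∈ A, ∃ y ∈ A, r = dist0 d x y}

/-- Lattice (nearest-neighbor) adjacency in `ℤ^d`. -/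
def latAdj (d : ℕ) (x y : Pt d) : Prop := (∑ i, (x i - y i).natAbs) = 1

/-- Exterior lattice boundary of a set. -/
def bdry (d : ℕ) (A : Set (Pt d)) : Set (Pt d) := {z | z ∉ A ∧ ∃ w ∈ A, latAdj d z w}

/-- Non-isolated configurations: some exposed element has a lattice neighbor in the set. -/
def NonIso (d : ℕ) (U : Conf d) : Prop :=
  ∃ x ∈ U, 0 < esc d (↑U) x ∧ ∃ y ∈ U, latAdj d x y

/-- `C` is a clustering (ordered partition into nonempty clusters) of `U`. -/
def IsClusteringOf (d : ℕ) {k : ℕ} (C : Fin k → Finset (Pt d)) (U : Finset (Pt d)) : Prop :=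
  (∀ i, (C i).Nonempty) ∧ (∀ i j, i ≠ j → Disjoint (C i) (C j)) ∧
    Finset.univ.biUnion C = U

/-- `C^{≠ i}`, the union of the clusters other than `i`. -/
def others (d : ℕ) {k : ℕ} (C : Fin k → Finset (Pt d)) (i : Fin k) : Finset (Pt d) :=
  Finset.univ.biUnion fun j => if j = i then ∅ else C j

/-- The separation of a clustering. -/
noncomputable def sep (d : ℕ) {k : ℕ} (C : Fin k → Finset (Pt d)) : ℝ :=
  ⨅ i, setDist d (C i) (others d C i)

/-- `(a, b)` separated dimer-or-trimer (DOT) clusterings. -/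
def IsDOT (d : ℕ) {k : ℕ} (C : Fin k → Finset (Pt d)) (a b : ℝ) : Prop :=
  (∀ i, (C i).card = 2 ∨ (C i).card = 3) ∧ a ≤ sep d C ∧
    ∀ i, diam0 d (C i) ≤ b * Real.log (setDist d (C i) (others d C i))

/-- Clusterings with an unspecified number of clusters. -/
abbrev ClusteringS (d : ℕ) := Σ k : ℕ, Fin k → Finset (Pt d)

/-- `π(C)`, the union of the clusters of `C`. -/
def confOf (d : ℕ) (C : ClusteringS d) : Conf d := Finset.univ.biUnion C.2

/-- `C ∈ 𝒞(U, a, b)`. -/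
def InC (d : ℕ) (U : Conf d) (a b : ℝ) (C : ClusteringS d) : Prop :=
  IsClusteringOf d C.2 U ∧ IsDOT d C.2 a b

/-- `U ∈ 𝒰_{d,n}(a, b)`. -/
def InU (d n : ℕ) (a b : ℝ) (U : Conf d) : Prop :=
  U.card = n ∧ ∃ C : ClusteringS d, InC d U a b C

/-- `C` is a clustering of an `n`-element configuration. -/
def IsClusteringConf (d n : ℕ) (C : ClusteringS d) : Prop :=
  (∀ i, (C.2 i).Nonempty) ∧ (∀ i j, i ≠ j → Disjoint (C.2 i) (C.2 j)) ∧
    (confOf d C).card = n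

open Classical in
/-- One step of the natural clustering. -/
noncomputable def clustStep (d : ℕ) (Ut Ut1 : Conf d) (C : ClusteringS d) : ClusteringS d :=
  if Ut1 = Ut then C
  else if h : ∃ p : Pt d × Pt d × Fin C.1,
      Ut \ Ut1 = {p.1} ∧ Ut1 \ Ut = {p.2.1} ∧ p.1 ∈ C.2 p.2.2 then
    ⟨C.1, Function.update C.2 h.choose.2.2
      (insert h.choose.2.1 ((C.2 h.choose.2.2).erase h.choose.1))⟩
  else ⟨1, fun _ => Ut1⟩

/-- The natural clustering of the trajectory `ω` with initial clustering `C0`. -/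
noncomputable def natClust (d : ℕ) (ω : ℕ → Conf d) (C0 : ClusteringS d) : ℕ → ClusteringS d
  | 0 => C0
  | t + 1 => clustStep d (ω t) (ω (t + 1)) (natClust d ω C0 t)

/-- `a_s = s^{1/2 − n^{−100}} + 100 n`. -/
noncomputable def aSep (n s : ℕ) : ℝ :=
  (s : ℝ) ^ ((1 : ℝ) / 2 - (n : ℝ) ^ (-(100 : ℝ))) + 100 * n

/-- `C^{i, x, y}`: remove `x` from cluster `i` of `C` and add `y` to that cluster. -/
def updC (d : ℕ) (C : ClusteringS d) (i : Fin C.1) (x y : Pt d) : ClusteringS d :=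
  ⟨C.1, Function.update C.2 i (insert y ((C.2 i).erase x))⟩

open Classical in
/-- The transition probabilities of the lifting of HAT to clusterings. -/
noncomputable def liftProb (d : ℕ) (E0 E1 : ClusteringS d) : ℝ :=
  ∑' x : Pt d, ∑' y : Pt d,
    if ∃ i : Fin E0.1, x ∈ E0.2 i ∧ E1 = updC d E0 i x y
    then pHAT d (confOf d E0) x y else 0

/-- The capacity of a clustering: the sum of the capacities of its clusters. -/
noncomputable def capS (d : ℕ) (C : ClusteringS d) : ℝ := ∑ i, capa d (↑(C.2 i))

/-- `H_C(i, x) = esc_{C^i}(x) / cap_C`. -/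
noncomputable def harmS (d : ℕ) (C : ClusteringS d) (i : Fin C.1) (x : Pt d) : ℝ :=
  esc d (↑(C.2 i)) x / capS d C

/-- `q_C(i, x, y)`. -/
noncomputable def qIHAT (d : ℕ) (C : ClusteringS d) (i : Fin C.1) (x y : Pt d) : ℝ :=
  harmS d C i x * transP d ((↑(C.2 i) : Set (Pt d)) \ {x}) x y

open Classical in
/-- The transition probabilities of intracluster HAT (IHAT). -/
noncomputable def ihatProb (d : ℕ) (D E : ClusteringS d) : ℝ :=
  ∑' x : Pt d, ∑' y : Pt d, ∑ i : Fin D.1,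
    if x ∈ D.2 i ∧ E = updC d D i x y then qIHAT d D i x y else 0

instance (d : ℕ) : MeasurableSpace (ClusteringS d) := ⊤

open Classical in
/-- `μ` is the law of the lifted HAT chain started from `E0`. -/
def IsLiftLaw (d : ℕ) (E0 : ClusteringS d) (μ : Measure (ℕ → ClusteringS d)) : Prop :=
  IsProbabilityMeasure μ ∧
  ∀ (t : ℕ) (u : ℕ → ClusteringS d),
    μ {ω | ∀ s ≤ t, ω s = u s} =
      (if u 0 = E0 then 1 else 0) *
        ∏ s ∈ Finset.range t, ENNReal.ofReal (liftProb d (u s) (u (s + 1)))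

open Classical in
/-- `μ` is the law of intracluster HAT started from `D0`. -/
def IsIHATLaw (d : ℕ) (D0 : ClusteringS d) (μ : Measure (ℕ → ClusteringS d)) : Prop :=
  IsProbabilityMeasure μ ∧
  ∀ (t : ℕ) (u : ℕ → ClusteringS d),
    μ {ω | ∀ s ≤ t, ω s = u s} =
      (if u 0 = D0 then 1 else 0) *
        ∏ s ∈ Finset.range t, ENNReal.ofReal (ihatProb d (u s) (u (s + 1)))

/-- `Pairs(E0, E1)`. -/
def Pairs (d : ℕ) (E0 E1 : ClusteringS d) : Set (Pt d × Pt d) :=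
  {p | 0 < pHAT d (confOf d E0) p.1 p.2 ∧
    ∃ i : Fin E0.1, p.1 ∈ E0.2 i ∧ E1 = updC d E0 i p.1 p.2}

/-- `Triples(E0, E1)`. -/
def Triples (d : ℕ) (E0 E1 : ClusteringS d) : Set (Fin E0.1 × Pt d × Pt d) :=
  {q | 0 < qIHAT d E0 q.1 q.2.1 q.2.2 ∧ E1 = updC d E0 q.1 q.2.1 q.2.2}

/-- The first standard basis vector of `ℤ^d`. -/
def e1v (d : ℕ) : Pt d := fun i => if (i : ℕ) = 0 then 1 else 0

/-- Reference dimers and trimers. -/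
def Ref (d : ℕ) : Set (Finset (Pt d)) :=
  {A | ∃ x : Pt d, A = {x, x + e1v d} ∨ A = {x, x + e1v d, x + e1v d + e1v d}}

/-- *-adjacency in `ℤ^d`: distinct points differing by at most one in each coordinate. -/
def starAdj (d : ℕ) (x y : Pt d) : Prop := x ≠ y ∧ ∀ i, (x i - y i).natAbs ≤ 1

/-- The *-visible boundary of `A`. -/
def visBdry (d : ℕ) (A : Finset (Pt d)) : Set (Pt d) :=
  {x | (∃ y ∈ A, starAdj d x y) ∧
    ∃ γ : ℕ → Pt d, γ 0 = x ∧ (∀ t, latAdj d (γ t) (γ (t + 1))) ∧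
      (∀ t, γ t ∉ A) ∧ ∀ r : ℝ, ∃ t, r < dist0 d (γ t) 0}

/-- `A` is connected in the nearest-neighbor graph of `ℤ^d`. -/
def LatConnected (d : ℕ) (A : Finset (Pt d)) : Prop :=
  ∀ x ∈ A, ∀ y ∈ A, ∃ (L : ℕ) (γ : ℕ → Pt d), γ 0 = x ∧ γ L = y ∧
    (∀ t < L, latAdj d (γ t) (γ (t + 1))) ∧ ∀ t ≤ L, γ t ∈ A

/-- Strict lexicographic order on `ℤ^d`. -/
def lexLt (d : ℕ) (x y : Pt d) : Prop :=
  ∃ i : Fin d, (∀ j, j < i → x j = y j) ∧ x i < y i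

/-- `x` is the lex (least) element of `A`. -/
def IsLex (d : ℕ) (A : Finset (Pt d)) (x : Pt d) : Prop :=
  x ∈ A ∧ ∀ y ∈ A, y ≠ x → lexLt d x y

/-!
A point is exterior to a finite set `W` if a lattice path avoiding `W` leads from it to infinity.
For `d ≥ 3` an element of a configuration is exposed exactly when it is exterior to the others.
Exposed elements are exterior because a walk confined to a finite set leaves it: `|x|²` grows by `1`
in mean at every step. Exterior elements are exposed because `(|x|² + 63)^(-1/4)` is positive,
superharmonic and vanishes at infinity, so that a walk started far away may miss the configuration.
Hence HAT carries, with positive probability, any exterior element to any exterior point of the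
boundary of the rest.

Moving again and again a lowest element on top of a highest one turns any configuration into a line
that lies above the target `V`. An exposed element `x` of `V` with a neighbor in `V` sits on the
exterior boundary of `V \ {x}`, so it suffices to build `V \ {x}` and to drop the one remaining
free element at `x`. This free element lets any other one move by a lattice step: the free one waits
at the destination until the other has left. So `V \ {x}` is built from its lowest layer upwards by
carrying elements down from the line. In dimension three some coordinate, other than the vertical
one, is constant along the current step, and along it both elements have a way out.
-/

section Configurations

variable {d : ℕ} {S T W : Conf d} {p q x y z z' m M : Pt d} {i i₀ i₁ : Fin d} {k : ℕ}

/-! ### The lattice -/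

lemma latAdj_comm : latAdj d x y ↔ latAdj d y x := by
  simp only [latAdj, ← Int.natAbs_neg (x _ - y _), neg_sub]

lemma latAdj_iff : latAdj d x y ↔ ∃ i, ∃ c : ℤ, (c = 1 ∨ c = -1) ∧ y = x + Pi.single i c := by
  constructor
  · intro h
    obtain ⟨i, -, hi⟩ : ∃ i ∈ Finset.univ, (x i - y i).natAbs ≠ 0 :=
      Finset.exists_ne_zero_of_sum_ne_zero (by rw [h]; exact one_ne_zero)
    rw [latAdj, ← Finset.add_sum_erase _ _ (Finset.mem_univ i)] at h
    have h_others : ∀ j ∈ Finset.univ.erase i, (x j - y j).natAbs = 0 :=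
      Finset.sum_eq_zero_iff.1 (by omega)
    refine ⟨i, y i - x i, by omega, funext fun j => ?_⟩
    obtain rfl | hj := eq_or_ne j i
    · simp
    · have := h_others j (by simp [hj])
      simp only [Pi.add_apply, Pi.single_eq_of_ne hj]
      omega
  · rintro ⟨i, c, hc, rfl⟩
    rw [latAdj, Finset.sum_eq_single i (fun j _ hj => by simp [hj]) (by simp)]
    simp only [Pi.add_apply, Pi.single_eq_same]
    omega

lemma latAdj_iff_sub_mem_dir : latAdj d x y ↔ y - x ∈ Dir d := by
  simp only [latAdj_iff, Dir, Set.mem_ofPred_eq, sub_eq_iff_eq_add', or_and_right, exists_or,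
    exists_eq_left]

lemma latAdj_add_single (x : Pt d) (i : Fin d) : latAdj d x (x + Pi.single i 1) :=
  latAdj_iff.2 ⟨i, 1, Or.inl rfl, rfl⟩

lemma latAdj.ne (h : latAdj d x y) : x ≠ y := by
  rintro rfl
  simp [latAdj] at h

lemma latAdj.exists_ne_apply_eq (hd : 3 ≤ d) (h : latAdj d x y) (i₀ : Fin d) :
    ∃ i ≠ i₀, x i = y i := by
  obtain ⟨j, c, -, rfl⟩ := latAdj_iff.1 h
  obtain ⟨i, hi⟩ : ∃ i, i ∉ ({i₀, j} : Finset (Fin d)) := by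
    by_contra! hall
    have := Finset.card_le_card fun i (_ : i ∈ Finset.univ) => hall i
    have := Finset.card_le_two (a := i₀) (b := j)
    simp only [Finset.card_univ, Fintype.card_fin] at *
    omega
  simp only [Finset.mem_insert, Finset.mem_singleton, not_or] at hi
  exact ⟨i, hi.1, by simp [hi.2]⟩

lemma apply_mem_uIcc (h : x ∈ Set.uIcc p q) (i : Fin d) : x i ∈ Set.uIcc (p i) (q i) :=
  ⟨h.1 i, h.2 i⟩

lemma exists_latAdj_mem_uIcc (h : p ≠ q) : ∃ r ∈ Set.uIcc p q, latAdj d p r ∧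
    ∑ i, (r i - q i).natAbs < ∑ i, (p i - q i).natAbs := by
  obtain ⟨i, hi⟩ := Function.ne_iff.1 h
  obtain ⟨c, hc, hlt, hmem⟩ : ∃ c : ℤ, (c = 1 ∨ c = -1) ∧
      (p i + c - q i).natAbs < (p i - q i).natAbs ∧ p i + c ∈ Set.uIcc (p i) (q i) := by
    simp only [Set.mem_uIcc]
    rcases lt_or_gt_of_ne hi with hi | hi
    · exact ⟨1, by omega⟩
    · exact ⟨-1, by omega⟩
  have h_off : ∀ j ≠ i, (p + Pi.single i c : Pt d) j = p j := fun j hj => by simp [hj]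
  have h_at : (p + Pi.single i c : Pt d) i = p i + c := by simp
  refine ⟨p + Pi.single i c, ?_, latAdj_iff.2 ⟨i, c, hc, rfl⟩,
    Finset.sum_lt_sum (fun j _ => ?_) ⟨i, Finset.mem_univ i, by rwa [h_at]⟩⟩
  · suffices ∀ j, (p + Pi.single i c : Pt d) j ∈ Set.uIcc (p j) (q j) from
      ⟨fun j => (this j).1, fun j => (this j).2⟩
    intro j
    obtain rfl | hj := eq_or_ne j i
    · rwa [h_at]
    · rw [h_off j hj]
      exact Set.left_mem_uIcc
  · obtain rfl | hj := eq_or_ne j i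
    · exact (h_at ▸ hlt).le
    · rw [h_off j hj]

lemma reflTransGen_latAdj_uIcc (p q : Pt d) :
    Relation.ReflTransGen (fun a b => b ∈ Set.uIcc p q ∧ latAdj d a b) p q := by
  induction hN : ∑ i, (p i - q i).natAbs using Nat.strong_induction_on generalizing p with
  | _ N ih =>
    obtain rfl | h := eq_or_ne p q
    · exact .refl
    · obtain ⟨r, hr, hadj, hlt⟩ := exists_latAdj_mem_uIcc h
      exact .head ⟨hr, hadj⟩ (Relation.ReflTransGen.mono
        (fun _ _ hb => ⟨Set.uIcc_subset_uIcc_right hr hb.1, hb.2⟩) _ _ (ih _ (hN ▸ hlt) r rfl))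

/-! ### Exterior points -/

/-- One step of a lattice path that avoids `W`; only the endpoint is required to lie outside `W`,
so that a path may start from a point of `W`. -/
def AvoidStep (W : Conf d) (a b : Pt d) : Prop := b ∉ W ∧ latAdj d a b

/-- Some lattice path from `p` to `q` avoids `W`, except possibly at its starting point. -/
def Reach (W : Conf d) : Pt d → Pt d → Prop := Relation.ReflTransGen (AvoidStep W)

lemma AvoidStep.reach (h : AvoidStep W p q) : Reach W p q := Relation.ReflTransGen.single h

lemma Reach.trans (h : Reach W p q) (h' : Reach W q x) : Reach W p x :=
  Relation.ReflTransGen.trans h h'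

lemma Reach.notMem (h : Reach W p q) (hp : p ∉ W) : q ∉ W := by
  cases h with
  | refl => exact hp
  | tail _ hs => exact hs.1

lemma Reach.symm (h : Reach W p q) (hp : p ∉ W) : Reach W q p := by
  induction h with
  | refl => exact .refl
  | tail hr hs ih => exact .head ⟨Reach.notMem hr hp, latAdj_comm.1 hs.2⟩ ih

lemma reach_of_uIcc (h : ∀ w ∈ W, w ∉ Set.uIcc p q) : Reach W p q :=
  Relation.ReflTransGen.mono (fun _ _ hb => ⟨fun hW => h _ hW hb.1, hb.2⟩) _ _
    (reflTransGen_latAdj_uIcc p q)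

lemma reach_of_lt (hp : ∀ w ∈ W, w i < p i) (hq : ∀ w ∈ W, w i < q i) : Reach W p q := by
  refine reach_of_uIcc fun w hw hmem => ?_
  have := Set.mem_uIcc.1 (apply_mem_uIcc hmem i)
  have := hp w hw
  have := hq w hw
  omega

/-- `p` is exterior to `W`: a path avoiding `W` leads from `p` to a point lying strictly above all
of `W` in some coordinate. -/
def Exterior (W : Conf d) (p : Pt d) : Prop := ∃ q, Reach W p q ∧ ∃ i, ∀ w ∈ W, w i < q i

lemma Exterior.of_reach (h : Reach W p q) (hq : Exterior W q) : Exterior W p := by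
  obtain ⟨r, hr, hi⟩ := hq
  exact ⟨r, h.trans hr, hi⟩

lemma Exterior.of_lt (i : Fin d) (h : ∀ w ∈ W, w i < p i) : Exterior W p := ⟨p, .refl, i, h⟩

lemma exists_lt_add (W : Conf d) (p : Pt d) (i : Fin d) : ∃ k : ℕ, ∀ w ∈ W, w i < p i + k := by
  obtain ⟨M, hM⟩ := (W.image fun w => w i).exists_le
  refine ⟨(M + 1 - p i).toNat, fun w hw => ?_⟩
  have := hM _ (Finset.mem_image_of_mem _ hw)
  omega

lemma Exterior.of_axis (i : Fin d) (h : ∀ w ∈ W, (∀ j ≠ i, w j = p j) → w i < p i) :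
    Exterior W p := by
  obtain ⟨k, hk⟩ := exists_lt_add W p i
  have h_top : (p + Pi.single i (k : ℤ) : Pt d) i = p i + k := by simp
  refine ⟨p + Pi.single i (k : ℤ), reach_of_uIcc fun w hw hmem => ?_, i,
    fun w hw => h_top ▸ hk w hw⟩
  have h_off : ∀ j ≠ i, w j = p j := fun j hj => by
    simpa [Pi.single_eq_of_ne hj] using apply_mem_uIcc hmem j
  have := h w hw h_off
  have := apply_mem_uIcc hmem i
  rw [h_top, Set.mem_uIcc] at this
  omega

lemma Exterior.of_ne (hd : 2 ≤ d) (j : Fin d) (h : ∀ w ∈ W, w j ≠ p j) : Exterior W p := by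
  have : Nontrivial (Fin d) := Fin.nontrivial_iff_two_le.2 hd
  obtain ⟨i, hi⟩ := exists_ne j
  exact .of_axis i fun w hw hwp => absurd (hwp j hi.symm) (h w hw)

lemma Exterior.of_lowest (hd : 2 ≤ d) (i : Fin d) (h : ∀ w ∈ W, p i ≤ w i) : Exterior W p := by
  have h_lt : ∀ w ∈ W, (p - Pi.single i 1 : Pt d) i < w i := fun w hw => by
    have := h w hw
    simp only [Pi.sub_apply, Pi.single_eq_same]
    omega
  have h_step : AvoidStep W p (p - Pi.single i 1) :=
    ⟨fun hmem => (h_lt _ hmem).false,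
      latAdj_iff.2 ⟨i, -1, Or.inr rfl, by rw [Pi.single_neg, sub_eq_add_neg]⟩⟩
  exact .of_reach h_step.reach (.of_ne hd i fun w hw => (h_lt w hw).ne')

lemma Exterior.exists_high (h : Exterior W p) (r : ℤ) : ∃ z i, Reach W p z ∧ r ≤ z i := by
  obtain ⟨q, hpq, i, hi⟩ := h
  have h_top : (q + Pi.single i (max 0 (r - q i)) : Pt d) i = q i + max 0 (r - q i) := by simp
  refine ⟨_, i, hpq.trans (reach_of_lt hi (q := q + Pi.single i (max 0 (r - q i))) fun w hw => ?_),
    ?_⟩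
  · have := hi w hw
    omega
  · omega

lemma Exterior.reach (hp : Exterior W p) (hq : Exterior W q) (hqW : q ∉ W) : Reach W p q := by
  obtain ⟨p', hpp, i, hi⟩ := hp
  obtain ⟨q', hqq, j, hj⟩ := hq
  obtain ⟨k, hk⟩ := exists_lt_add W p' j
  have h_raise_j : ∀ w ∈ W, w j < (p' + Pi.single j (k : ℤ) : Pt d) j := fun w hw => by
    simpa using hk w hw
  have h_raise_i : ∀ w ∈ W, w i < (p' + Pi.single j (k : ℤ) : Pt d) i := fun w hw => by
    have := hi w hw
    simp only [Pi.add_apply, Pi.single_apply]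
    split_ifs <;> omega
  exact ((hpp.trans (reach_of_lt hi h_raise_i)).trans (reach_of_lt h_raise_j hj)).trans
    (hqq.symm hqW)

/-! ### Moves of exterior elements -/

/-- The exterior points of the lattice boundary of `W`: the possible last positions, before it hits
`W`, of a walk started far away. -/
def outerBdry (W : Conf d) : Set (Pt d) := {y | y ∈ bdry d ↑W ∧ Exterior W y}

/-- The combinatorial form of a HAT transition with positive probability: an element exterior to the
rest `W` of the configuration is moved to a point of `outerBdry W`. -/
def HatMove (U V : Conf d) : Prop :=
  ∃ W x y, x ∉ W ∧ Exterior W x ∧ y ∈ outerBdry W ∧ x ≠ y ∧ U = insert x W ∧ V = insert y W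

/-- `V` can be obtained from `U` by finitely many moves of exterior elements. -/
def HatReach : Conf d → Conf d → Prop := Relation.ReflTransGen HatMove

lemma mem_outerBdry_iff :
    y ∈ outerBdry W ↔ y ∉ W ∧ (∃ w ∈ W, latAdj d y w) ∧ Exterior W y :=
  and_assoc

lemma HatReach.trans {U V V' : Conf d} (h : HatReach U V) (h' : HatReach V V') : HatReach U V' :=
  Relation.ReflTransGen.trans h h'

lemma HatReach.of_insert (hxW : x ∉ W) (hx : Exterior W x) (hy : y ∈ outerBdry W) :
    HatReach (insert x W) (insert y W) := by
  obtain rfl | hxy := eq_or_ne x y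
  · exact .refl
  · exact Relation.ReflTransGen.single ⟨W, x, y, hxW, hx, hy, hxy, rfl, rfl⟩

lemma add_single_mem_outerBdry (hq : q ∈ W) (htop : ∀ w ∈ W, w i ≤ q i) :
    q + Pi.single i 1 ∈ outerBdry W := by
  have hlt : ∀ w ∈ W, w i < (q + Pi.single i 1 : Pt d) i := fun w hw => by
    have := htop w hw
    simp only [Pi.add_apply, Pi.single_eq_same]
    omega
  exact mem_outerBdry_iff.2 ⟨fun hmem => (hlt _ hmem).false,
    ⟨q, hq, latAdj_comm.1 (latAdj_add_single q i)⟩, .of_lt i hlt⟩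

lemma HatReach.lowest_to_top (hd : 2 ≤ d) (hxW : x ∉ W) (hlow : ∀ w ∈ W, x i ≤ w i) (hq : q ∈ W)
    (htop : ∀ w ∈ W, w i ≤ q i) : HatReach (insert x W) (insert (q + Pi.single i 1) W) :=
  .of_insert hxW (.of_lowest hd i hlow) (add_single_mem_outerBdry hq htop)

/-! ### Gathering a configuration into a line -/

/-- The line segment of `k` consecutive points starting at `m` in direction `i`. -/
def line (i : Fin d) (m : Pt d) (k : ℕ) : Conf d :=
  (Finset.range k).image fun j : ℕ => m + Pi.single i (j : ℤ)

lemma mem_line_iff : x ∈ line i m k ↔ ∃ j < k, m + Pi.single i (j : ℤ) = x := by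
  simp [line]

lemma le_apply_of_mem_line (h : x ∈ line i m k) : m i ≤ x i := by
  obtain ⟨j, -, rfl⟩ := mem_line_iff.1 h
  simp

lemma apply_lt_of_mem_line (h : x ∈ line i m k) : x i < m i + k := by
  obtain ⟨j, hj, rfl⟩ := mem_line_iff.1 h
  simpa using hj

lemma eq_of_mem_line_of_apply_le (h : x ∈ line i m k) (hle : x i ≤ m i) : x = m := by
  obtain ⟨j, -, rfl⟩ := mem_line_iff.1 h
  obtain rfl : j = 0 := by
    simp only [Pi.add_apply, Pi.single_eq_same] at hle
    omega
  simp

@[simp] lemma line_zero : line i m 0 = ∅ := rfl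

lemma add_single_add_single_one (m : Pt d) (i : Fin d) (k : ℕ) :
    m + Pi.single i (k : ℤ) + Pi.single i 1 = m + Pi.single i ((k + 1 : ℕ) : ℤ) := by
  rw [add_assoc, ← Pi.single_add, Nat.cast_succ]

lemma line_succ (i : Fin d) (m : Pt d) (k : ℕ) :
    line i m (k + 1) = insert (m + Pi.single i (k : ℤ)) (line i m k) := by
  simp [line, Finset.range_add_one]

lemma line_succ' (i : Fin d) (m : Pt d) (k : ℕ) :
    line i m (k + 1) = insert m (line i (m + Pi.single i 1) k) := by
  induction k with
  | zero => simp [line]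
  | succ k ih =>
    rw [line_succ, ih, Finset.insert_comm, ← add_single_add_single_one, add_right_comm,
      ← line_succ]

lemma hatReach_union_line (hd : 2 ≤ d) (A : Conf d) (k : ℕ) (hle : ∀ a ∈ A, a i ≤ m i)
    (hm : m ∉ A) : HatReach (A ∪ line i m (k + 1)) (line i m (k + 1 + A.card)) := by
  induction A using Finset.induction_on_min_value (fun a : Pt d => a i) generalizing k with
  | empty => rw [Finset.empty_union]; exact .refl
  | insert a s ha hmin ih =>
    rw [Finset.forall_mem_insert] at hle
    rw [Finset.mem_insert, not_or] at hm
    have h_raise : HatReach (insert a (s ∪ line i m (k + 1)))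
        (insert (m + Pi.single i (k : ℤ) + Pi.single i 1) (s ∪ line i m (k + 1))) := by
      refine .lowest_to_top (i := i) hd ?_ (fun w hw => ?_) ?_ (fun w hw => ?_)
      · rw [Finset.mem_union, not_or]
        exact ⟨ha, fun h => hm.1 (eq_of_mem_line_of_apply_le h hle.1).symm⟩
      · exact (Finset.mem_union.1 hw).elim (hmin w) fun hw => hle.1.trans (le_apply_of_mem_line hw)
      · exact Finset.mem_union_right _ (mem_line_iff.2 ⟨k, k.lt_succ_self, rfl⟩)
      · simp only [Pi.add_apply, Pi.single_eq_same]
        rcases Finset.mem_union.1 hw with hw | hw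
        · have := hle.2 w hw
          omega
        · have := apply_lt_of_mem_line hw
          omega
    rw [add_single_add_single_one, ← Finset.insert_union a, ← Finset.union_insert, ← line_succ]
      at h_raise
    rw [Finset.card_insert_of_notMem ha, ← add_assoc, add_right_comm (k + 1)]
    exact h_raise.trans (ih (k + 1) hle.2 hm.2)

lemma hatReach_line_add_single (hd : 2 ≤ d) (i : Fin d) (m : Pt d) (k : ℕ) :
    HatReach (line i m (k + 2)) (line i (m + Pi.single i 1) (k + 2)) := by
  rw [line_succ', line_succ i _ (k + 1), ← add_single_add_single_one]
  refine .lowest_to_top (i := i) hd (fun h => ?_) (fun w hw => ?_)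
    (mem_line_iff.2 ⟨k, k.lt_succ_self, rfl⟩) (fun w hw => ?_)
  · simpa using le_apply_of_mem_line h
  · exact le_trans (by simp) (le_apply_of_mem_line hw)
  · have := apply_lt_of_mem_line hw
    simp only [Pi.add_apply, Pi.single_eq_same] at this ⊢
    omega

lemma exists_hatReach_line (hd : 2 ≤ d) (i : Fin d) {U : Conf d} (hU : 1 < U.card) (r : ℤ) :
    ∃ M : Pt d, r ≤ M i ∧ HatReach U (line i M U.card) := by
  obtain ⟨m, hmU, hmax⟩ := U.exists_max_image (· i) (Finset.card_pos.1 (by omega))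
  obtain ⟨n, hn⟩ : ∃ n, U.card = n + 2 := ⟨U.card - 2, by omega⟩
  have h_gather : HatReach U (line i m U.card) := by
    have := hatReach_union_line hd (U.erase m) 0
      (fun a ha => hmax a (Finset.mem_of_mem_erase ha)) (Finset.notMem_erase m U)
    rwa [zero_add, add_comm, Finset.card_erase_add_one hmU, line_succ', line_zero,
      Finset.union_comm, Finset.insert_union, Finset.empty_union, Finset.insert_erase hmU] at this
  have h_shift (k : ℕ) : HatReach U (line i (m + Pi.single i (k : ℤ)) U.card) := by
    induction k with
    | zero => simpa using h_gather
    | succ k ih =>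
      rw [← add_single_add_single_one]
      exact ih.trans (hn ▸ hatReach_line_add_single hd i _ n)
  refine ⟨_, ?_, h_shift (r - m i).toNat⟩
  simp only [Pi.add_apply, Pi.single_eq_same]
  omega

/-! ### Building a configuration out of a line -/

/-- Every configuration obtained from `S` by adding a point of its exterior boundary can be reached
from `L`. Keeping the last element free is what makes `S` amenable to an induction that moves its
elements one lattice step at a time. -/
def ReachesCompletions (L S : Conf d) : Prop := ∀ y ∈ outerBdry S, HatReach L (insert y S)

-- The free element waits at `z` until the element at `z'` has left.
lemma ReachesCompletions.of_adj {L : Conf d} (hadj : latAdj d z z') (hz : z ∉ T) (hz' : z' ∉ T)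
    (hext : Exterior (insert z' T) z) (hext' : Exterior (insert z T) z')
    (h : ReachesCompletions L (insert z' T)) : ReachesCompletions L (insert z T) := by
  intro y hy
  have h_park : HatReach L (insert z (insert z' T)) :=
    h z (mem_outerBdry_iff.2
      ⟨by simp [hadj.ne, hz], ⟨z', Finset.mem_insert_self _ _, hadj⟩, hext⟩)
  rw [Finset.insert_comm] at h_park
  exact h_park.trans (.of_insert (by simp [hadj.ne.symm, hz']) hext' hy)

lemma exterior_insert (hi : i ≠ i₀) (hne : q ≠ p) (hle : q i ≤ p i) (hT : ∀ t ∈ T, t i₀ ≠ p i₀) :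
    Exterior (insert q T) p := by
  refine .of_axis i ((Finset.forall_mem_insert _ _ _).2 ⟨fun hq => hle.lt_of_ne fun hqi => hne ?_,
    fun t ht h => absurd (h i₀ hi.symm) (hT t ht)⟩)
  funext j
  obtain rfl | hj := eq_or_ne j i
  exacts [hqi, hq j hj]

lemma ReachesCompletions.of_uIcc (hd : 3 ≤ d) {L : Conf d} (i₀ : Fin d)
    (hT : ∀ t ∈ T, t i₀ ∉ Set.uIcc (p i₀) (q i₀)) (h : ReachesCompletions L (insert q T)) :
    ReachesCompletions L (insert p T) := by
  have h_level : ∀ b ∈ Set.uIcc p q, ∀ t ∈ T, t i₀ ≠ b i₀ :=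
    fun b hb t ht hbt => hT t ht (hbt ▸ apply_mem_uIcc hb i₀)
  suffices ∀ v, Relation.ReflTransGen (fun a b => b ∈ Set.uIcc p q ∧ latAdj d a b) p v →
      v ∈ Set.uIcc p q ∧ (ReachesCompletions L (insert v T) → ReachesCompletions L (insert p T))
    from (this q (reflTransGen_latAdj_uIcc p q)).2 h
  intro v hv
  induction hv with
  | refl => exact ⟨Set.left_mem_uIcc, id⟩
  | @tail a b _ hab ih =>
    obtain ⟨hb, hadj⟩ := hab
    obtain ⟨i, hi, hab⟩ := hadj.exists_ne_apply_eq hd i₀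
    have ha_level := h_level a ih.1
    have hb_level := h_level b hb
    exact ⟨hb, fun h => ih.2 (.of_adj hadj (fun hm => ha_level a hm rfl)
      (fun hm => hb_level b hm rfl) (exterior_insert hi hadj.ne.symm hab.ge ha_level)
      (exterior_insert hi hadj.ne hab.le hb_level) h)⟩

lemma ReachesCompletions.of_add_single {L : Conf d} (hi : i₁ ≠ i₀) (hz : z ∉ T)
    (hz₁ : z + Pi.single i₁ 1 ∉ T) (hT : ∀ t ∈ T, t i₀ ≠ z i₀ + 1)
    (h : ReachesCompletions L (insert (z + Pi.single i₀ 1) T)) :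
    ReachesCompletions L (insert z T) := by
  have h_ne : z + Pi.single i₀ 1 ≠ z + Pi.single i₁ 1 := fun h => by
    simpa [hi] using congrFun h i₁
  have h_ne' : z + Pi.single i₀ 1 ≠ z + Pi.single i₁ 1 + Pi.single i₀ 1 := fun h => by
    simpa [hi] using congrFun h i₁
  have h_notMem : ∀ v : Pt d, v i₀ = z i₀ + 1 → v ∉ T := fun v hv hvT => hT v hvT hv
  have h_path : Reach (insert (z + Pi.single i₀ 1) T) z
      (z + Pi.single i₁ 1 + Pi.single i₀ 1) :=
    .trans (AvoidStep.reach ⟨by simp [h_ne.symm, hz₁], latAdj_add_single z i₁⟩)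
      (AvoidStep.reach ⟨by simpa [h_ne'.symm] using h_notMem _ (by simp [hi.symm]),
        latAdj_add_single _ i₀⟩)
  refine .of_adj (latAdj_add_single z i₀) hz (h_notMem _ (by simp))
    (.of_reach h_path (exterior_insert hi h_ne' ?_ ?_))
    (exterior_insert hi (latAdj_add_single z i₀).ne ?_ ?_) h
  · simp [hi]
  · simpa [hi.symm] using hT
  · simp [hi]
  · simpa using hT

lemma ReachesCompletions.line_union (hd : 3 ≤ d) (hi : i₁ ≠ i₀) (A : Conf d) (k : ℕ)
    (hA : ∀ a ∈ A, a i₀ < M i₀) : ReachesCompletions (line i₀ M (A.card + k + 1))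
      (A ∪ line i₀ (M + Pi.single i₀ (A.card : ℤ)) k) := by
  induction A using Finset.induction_on_max_value (fun a : Pt d => toLex (a i₀, a i₁))
    generalizing k with
  | empty =>
    intro y hy
    simp only [Finset.card_empty, Nat.cast_zero, Pi.single_zero, add_zero, zero_add,
      Finset.empty_union, line_succ] at hy ⊢
    have h_above : ∀ w ∈ line i₀ M k, w i₀ < (M + Pi.single i₀ (k : ℤ) : Pt d) i₀ := fun w hw => by
      simpa using apply_lt_of_mem_line hw
    exact .of_insert (fun h => (h_above _ h).false) (.of_lt i₀ h_above) hy
  | insert z A hz hmax ih =>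
    obtain ⟨hzM, hAM⟩ := (Finset.forall_mem_insert _ _ _).1 hA
    have h_ih := ih (k + 1) hAM
    rw [line_succ' i₀ _ k, Finset.union_insert, add_single_add_single_one, ← add_assoc,
      add_right_comm A.card] at h_ih
    rw [Finset.card_insert_of_notMem hz, Finset.insert_union]
    set T := A ∪ line i₀ (M + Pi.single i₀ ((A.card + 1 : ℕ) : ℤ)) k
    have h_low : ∀ a ∈ A, a i₀ < z i₀ ∨ a i₀ = z i₀ ∧ a i₁ ≤ z i₁ := fun a ha => by
      simpa [Prod.Lex.toLex_le_toLex] using hmax a ha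
    have h_levels : ∀ t ∈ T, t ∈ A ∧ t i₀ ≤ z i₀ ∨ M i₀ + A.card < t i₀ := fun t ht => by
      rcases Finset.mem_union.1 ht with ht | ht
      · exact .inl ⟨ht, (h_low t ht).elim le_of_lt fun h => h.1.le⟩
      · have := le_apply_of_mem_line ht
        simp only [Pi.add_apply, Pi.single_eq_same] at this
        exact .inr (by omega)
    refine .of_add_single hi (fun h => ?_) (fun h => ?_) (fun t ht => ?_)
      (.of_uIcc hd i₀ (fun t ht => ?_) h_ih)
    · rcases h_levels _ h with h | h
      exacts [hz h.1, by omega]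
    · rcases h_levels _ h with h | h
      · simpa [hi.symm] using h_low _ h.1
      · simp only [Pi.add_apply, Pi.single_eq_of_ne hi.symm] at h
        omega
    · have := h_levels t ht
      omega
    · have := h_levels t ht
      simp only [Pi.add_apply, Pi.single_eq_same, Set.mem_uIcc]
      omega

lemma hatReach_insert (hd : 3 ≤ d) {U : Conf d} (hU : U.card = S.card + 1)
    (hy : y ∈ outerBdry S) : HatReach U (insert y S) := by
  obtain ⟨-, ⟨w, hw, -⟩, -⟩ := mem_outerBdry_iff.1 hy
  have : 0 < S.card := Finset.card_pos.2 ⟨w, hw⟩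
  obtain ⟨i₀, i₁, hi⟩ : ∃ i₀ i₁ : Fin d, i₁ ≠ i₀ := ⟨⟨0, by omega⟩, ⟨1, by omega⟩, by simp⟩
  obtain ⟨k, hk⟩ := exists_lt_add S 0 i₀
  obtain ⟨M, hM, h_line⟩ :=
    exists_hatReach_line (U := U) (by omega) i₀ (by omega) ((0 : Pt d) i₀ + k)
  have h_completions := ReachesCompletions.line_union hd hi S 0 fun a ha => (hk a ha).trans_le hM
  rw [line_zero, Finset.union_empty, add_zero, ← hU] at h_completions
  exact h_line.trans (h_completions y hy)

end Configurations

section Walk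

variable {d T : ℕ} {W : Conf d} {p x : Pt d} {A B : Set (Pt d)} {f g : Pt d → ℝ} {t u v M : ℝ}

/-! ### First-step analysis of the walk -/

/-- The unit steps, listed by coordinate and sign. -/
noncomputable def dirEquiv (d : ℕ) : Fin d × Bool ≃ Dir d :=
  .ofBijective (fun k => ⟨Pi.single k.1 (cond k.2 1 (-1)), k.1, by cases k.2 <;> simp⟩) <| by
    refine ⟨?_, ?_⟩
    · rintro ⟨i, b⟩ ⟨j, c⟩ h
      have h_apply : (Pi.single i (cond b 1 (-1)) : Pt d) i =
          (Pi.single j (cond c 1 (-1)) : Pt d) i := congrFun (congrArg Subtype.val h) i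
      obtain rfl | hij := eq_or_ne i j
      · cases b <;> cases c <;> simp_all
      · cases b <;> simp [hij] at h_apply
    · rintro ⟨e, i, rfl | rfl⟩
      exacts [⟨(i, true), rfl⟩, ⟨(i, false), rfl⟩]

noncomputable instance (d : ℕ) : Fintype (Dir d) := .ofEquiv _ (dirEquiv d)

lemma card_dir (d : ℕ) : Fintype.card (Dir d) = 2 * d := by
  rw [← Fintype.card_congr (dirEquiv d), Fintype.card_prod, Fintype.card_fin, Fintype.card_bool,
    mul_comm]

lemma sum_dir (f : Pt d → ℝ) :
    ∑ e : Dir d, f e = ∑ i, (f (Pi.single i 1) + f (Pi.single i (-1))) := by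
  rw [← (dirEquiv d).sum_comp, Fintype.sum_prod_type]
  exact Finset.sum_congr rfl fun i _ => Fintype.sum_bool _

/-- The transition operator of simple random walk: `stepMean f x` is the expectation of `f` after
one step from `x`. -/
noncomputable def stepMean : (Pt d → ℝ) →ₗ[ℝ] Pt d → ℝ where
  toFun f x := (∑ e : Dir d, f (x + e)) / (2 * d : ℕ)
  map_add' f g := by
    ext x
    simp only [Pi.add_apply, Finset.sum_add_distrib, add_div]
  map_smul' c f := by
    ext x
    simp only [Pi.smul_apply, smul_eq_mul, RingHom.id_apply, ← Finset.mul_sum, mul_div_assoc]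

lemma stepMean_apply (f : Pt d → ℝ) (x : Pt d) :
    stepMean f x = (∑ e : Dir d, f (x + e)) / (2 * d : ℕ) := rfl

lemma latAdj_add (x : Pt d) (e : Dir d) : latAdj d x (x + e) :=
  latAdj_iff_sub_mem_dir.2 (by rw [add_sub_cancel_left]; exact e.2)

lemma stepMean_mono (h : ∀ y, latAdj d x y → f y ≤ g y) : stepMean f x ≤ stepMean g x :=
  div_le_div_of_nonneg_right (Finset.sum_le_sum fun e _ => h _ (latAdj_add x e)) (Nat.cast_nonneg _)

lemma stepMean_const (hd : 0 < d) (c : ℝ) (x : Pt d) : stepMean (fun _ => c) x = c := by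
  have : ((2 * d : ℕ) : ℝ) ≠ 0 := by positivity
  rw [stepMean_apply, Finset.sum_const, Finset.card_univ, card_dir, nsmul_eq_mul,
    mul_div_cancel_left₀ _ this]

lemma stepMean_nonneg (h : ∀ y, latAdj d x y → 0 ≤ f y) : 0 ≤ stepMean f x :=
  div_nonneg (Finset.sum_nonneg fun e _ => h _ (latAdj_add x e)) (Nat.cast_nonneg _)

lemma div_le_stepMean (h : latAdj d x p) (hf : 0 ≤ f) : f p / (2 * d : ℕ) ≤ stepMean f x := by
  refine div_le_div_of_nonneg_right ?_ (Nat.cast_nonneg _)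
  simpa using Finset.single_le_sum (f := fun e : Dir d => f (x + e)) (fun e _ => hf _)
    (Finset.mem_univ ⟨p - x, latAdj_iff_sub_mem_dir.1 h⟩)

instance (T : ℕ) (P : (Fin T → Pt d) → Prop) :
    Finite {s : Fin T → Pt d // (∀ i, s i ∈ Dir d) ∧ P s} :=
  .of_injective (β := Fin T → Dir d) (fun s i => ⟨s.1 i, s.2.1 i⟩) fun _ _ h =>
    Subtype.ext <| funext fun i => congrArg Subtype.val (congrFun h i)

lemma prob_nonneg (d T : ℕ) (P : (Fin T → Pt d) → Prop) : 0 ≤ prob d T P := by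
  unfold prob
  positivity

lemma prob_mono {P Q : (Fin T → Pt d) → Prop} (h : ∀ s, P s → Q s) :
    prob d T P ≤ prob d T Q := by
  unfold prob
  gcongr
  exact Nat.card_le_card_of_injective (Subtype.map id fun _ hs => ⟨hs.1, h _ hs.2⟩)
    (Subtype.map_injective _ Function.injective_id)

lemma prob_false (d T : ℕ) : prob d T (fun _ => False) = 0 := by
  simp [prob]

lemma prob_zero {P : (Fin 0 → Pt d) → Prop} (h : ∀ s, P s) : prob d 0 P = 1 := by
  simp [prob, h]

lemma prob_succ (P : (Fin (T + 1) → Pt d) → Prop) :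
    prob d (T + 1) P =
      (∑ e : Dir d, prob d T fun s => P (Fin.cons (e : Pt d) s)) / (2 * d : ℕ) := by
  let e : {s : Fin (T + 1) → Pt d // (∀ i, s i ∈ Dir d) ∧ P s} ≃
      Σ e : Dir d, {s : Fin T → Pt d // (∀ i, s i ∈ Dir d) ∧ P (Fin.cons (e : Pt d) s)} :=
    { toFun s := ⟨⟨s.1 0, s.2.1 0⟩, Fin.tail s.1, fun i => s.2.1 i.succ,
        (congrArg P (Fin.cons_self_tail s.1)).mpr s.2.2⟩
      invFun s := ⟨Fin.cons (s.1 : Pt d) s.2.1, Fin.cases s.1.2 s.2.2.1, s.2.2.2⟩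
      left_inv s := Subtype.ext (Fin.cons_self_tail s.1)
      right_inv s := rfl }
  unfold prob
  rw [Nat.card_congr e, Nat.card_sigma, Nat.cast_sum, ← Finset.sum_div, pow_succ, div_div]

lemma prob_succ_pos {P : (Fin (T + 1) → Pt d) → Prop} (e : Dir d)
    (h : 0 < prob d T fun s => P (Fin.cons (e : Pt d) s)) : 0 < prob d (T + 1) P := by
  have hd : 0 < 2 * d := Nat.mul_pos two_pos e.2.choose.pos
  rw [prob_succ]
  exact div_pos (Finset.sum_pos' (fun _ _ => prob_nonneg _ _ _) ⟨e, Finset.mem_univ e, h⟩)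
    (Nat.cast_pos.2 hd)

lemma wpos_zero (x : Pt d) (s : Fin T → Pt d) : wpos d x s 0 = x := by
  simp [wpos]

lemma wpos_cons (x e : Pt d) (s : Fin T → Pt d) (t : ℕ) :
    wpos d x (Fin.cons e s : Fin (T + 1) → Pt d) (t + 1) = wpos d (x + e) s t := by
  unfold wpos
  rw [Finset.sum_filter, Fin.sum_univ_succ, Finset.sum_filter]
  simp [add_assoc]

lemma avoids_cons {e : Pt d} {s : Fin T → Pt d} {t : ℕ} :
    (∀ u, 1 ≤ u → u < t + 2 → wpos d x (Fin.cons e s : Fin (T + 1) → Pt d) u ∉ A) ↔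
      x + e ∉ A ∧ ∀ u, 1 ≤ u → u < t + 1 → wpos d (x + e) s u ∉ A := by
  refine ⟨fun h => ⟨?_, fun u _ hu => ?_⟩, fun ⟨h_first, h⟩ u hu hut => ?_⟩
  · simpa only [wpos_cons, wpos_zero] using h 1 le_rfl (by omega)
  · simpa only [wpos_cons] using h (u + 1) (by omega) (by omega)
  · obtain ⟨u, rfl⟩ := Nat.exists_eq_add_of_le' hu
    rw [wpos_cons]
    obtain rfl | hu' := u.eq_zero_or_pos
    · rwa [wpos_zero]
    · exact h u hu' (by omega)

/-! ### Escape probabilities -/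

/-- The probability that the walk started at `x` avoids `A` at the times `1, …, T`. -/
noncomputable def avoidProb (A : Set (Pt d)) (T : ℕ) (x : Pt d) : ℝ :=
  prob d T fun s => ∀ u, 1 ≤ u → u < T + 1 → wpos d x s u ∉ A

lemma avoidProb_nonneg (A : Set (Pt d)) (T : ℕ) : 0 ≤ avoidProb A T :=
  fun _ => prob_nonneg _ _ _

lemma avoidProb_anti (h : A ⊆ B) (T : ℕ) (x : Pt d) : avoidProb B T x ≤ avoidProb A T x :=
  prob_mono fun _ hs u hu huT hA => hs u hu huT (h hA)

lemma avoidProb_zero (A : Set (Pt d)) (x : Pt d) : avoidProb A 0 x = 1 :=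
  prob_zero fun _ _ _ _ => by omega

lemma avoidProb_succ (A : Set (Pt d)) (T : ℕ) :
    avoidProb A (T + 1) = stepMean (Aᶜ.indicator (avoidProb A T)) := by
  funext x
  unfold avoidProb
  simp only [prob_succ, stepMean_apply, avoids_cons]
  congr 1
  refine Finset.sum_congr rfl fun e _ => ?_
  by_cases h : x + (e : Pt d) ∈ A
  · simp [h, prob_false]
  · simp [h]

/-- `P_x(τ_A = ∞)`, for a starting point `x` that need not belong to `A`. -/
noncomputable def escProb (A : Set (Pt d)) (x : Pt d) : ℝ := ⨅ T, avoidProb A T x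

lemma esc_of_mem (hx : x ∈ A) : esc d A x = escProb A x := by
  simp only [esc, if_pos hx, escProb, avoidProb, Nat.lt_succ_iff]

lemma escProb_le_avoidProb (A : Set (Pt d)) (T : ℕ) (x : Pt d) : escProb A x ≤ avoidProb A T x :=
  ciInf_le ⟨0, Set.forall_mem_range.2 fun T => avoidProb_nonneg A T x⟩ T

lemma escProb_nonneg (A : Set (Pt d)) : 0 ≤ escProb A :=
  fun x => Real.iInf_nonneg fun T => avoidProb_nonneg A T x

lemma esc_nonneg (A : Set (Pt d)) (x : Pt d) : 0 ≤ esc d A x := by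
  by_cases hx : x ∈ A
  · exact (escProb_nonneg A x).trans_eq (esc_of_mem hx).symm
  · simp [esc, hx]

lemma escProb_anti (h : A ⊆ B) (x : Pt d) : escProb B x ≤ escProb A x :=
  le_ciInf fun T => (escProb_le_avoidProb B T x).trans (avoidProb_anti h T x)

lemma escProb_pos_of_adj (hd : 0 < d) (h : latAdj d x p) (hp : p ∉ A) (hpos : 0 < escProb A p) :
    0 < escProb A x := by
  have hd' : (1 : ℝ) ≤ (2 * d : ℕ) := Nat.one_le_cast.2 (by omega)
  refine (div_pos hpos (one_pos.trans_le hd')).trans_le (le_ciInf fun T => ?_)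
  cases T with
  | zero =>
    rw [avoidProb_zero]
    refine (div_le_self hpos.le hd').trans ?_
    simpa only [avoidProb_zero] using escProb_le_avoidProb A 0 p
  | succ T =>
    rw [avoidProb_succ]
    refine le_trans ?_ (div_le_stepMean h (Set.indicator_nonneg fun y _ => avoidProb_nonneg A T y))
    rw [Set.indicator_of_mem hp]
    gcongr
    exact escProb_le_avoidProb A T p

lemma one_sub_avoidProb_le (hd : 0 < d) (hf : 0 ≤ f) (h_super : stepMean f ≤ f)
    (hA : ∀ a ∈ A, 1 ≤ f a) (T : ℕ) (x : Pt d) : 1 - avoidProb A T x ≤ f x := by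
  induction T generalizing x with
  | zero =>
    rw [avoidProb_zero, sub_self]
    exact hf x
  | succ T ih =>
    calc 1 - avoidProb A (T + 1) x
        = stepMean ((fun _ => 1) - Aᶜ.indicator (avoidProb A T)) x := by
          rw [map_sub, Pi.sub_apply, stepMean_const hd, avoidProb_succ]
      _ ≤ stepMean f x := stepMean_mono fun y _ => by
          by_cases hy : y ∈ A
          · simpa [hy] using hA y hy
          · simpa [hy] using ih y
      _ ≤ f x := h_super x

-- Optional stopping: `f` decreases by at least `1` in mean at every step made inside `C`, so it
-- bounds the expected time spent there.
lemma sum_avoidProb_le {C : Set (Pt d)} (hC : ∀ p ∈ C, ∀ y, latAdj d p y → y ∉ A → y ∈ C)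
    (hf : ∀ p ∈ C, ∀ y, latAdj d p y → 0 ≤ f y) (h_super : ∀ p ∈ C, stepMean f p + 1 ≤ f p)
    (T : ℕ) (hp : p ∈ C) : ∑ t ∈ Finset.range T, avoidProb A t p ≤ f p := by
  induction T generalizing p with
  | zero =>
    have := stepMean_nonneg (hf p hp)
    have := h_super p hp
    simp only [Finset.range_zero, Finset.sum_empty]
    linarith
  | succ T ih =>
    have h_step : ∑ t ∈ Finset.range T, avoidProb A (t + 1) p ≤ stepMean f p := by
      simp only [avoidProb_succ]
      rw [← Finset.sum_apply, ← map_sum]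
      refine stepMean_mono fun y hy => ?_
      rw [Finset.sum_apply]
      by_cases hyA : y ∈ A
      · simpa [hyA] using hf p hp y hy
      · simpa [hyA] using ih (hC p hp y hy hyA)
    rw [Finset.sum_range_succ', avoidProb_zero]
    linarith [h_super p hp]

/-- The squared Euclidean norm. -/
noncomputable def normSq (x : Pt d) : ℝ := ∑ i, (x i : ℝ) ^ 2

lemma normSq_nonneg (x : Pt d) : 0 ≤ normSq x := Finset.sum_nonneg fun _ _ => sq_nonneg _

lemma sq_le_normSq (x : Pt d) (i : Fin d) : (x i : ℝ) ^ 2 ≤ normSq x :=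
  Finset.single_le_sum (f := fun i => (x i : ℝ) ^ 2) (fun _ _ => sq_nonneg _) (Finset.mem_univ i)

lemma normSq_add_single (x : Pt d) (i : Fin d) (c : ℤ) :
    normSq (x + Pi.single i c) = normSq x + 2 * c * x i + c ^ 2 := by
  have h_off : ∀ j ∈ Finset.univ.erase i,
      (((x + Pi.single i c : Pt d) j : ℤ) : ℝ) ^ 2 = (x j : ℝ) ^ 2 := fun j hj => by
    simp [Finset.ne_of_mem_erase hj]
  rw [normSq, normSq, ← Finset.add_sum_erase _ _ (Finset.mem_univ i), Finset.sum_congr rfl h_off,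
    ← Finset.add_sum_erase _ (fun i => (x i : ℝ) ^ 2) (Finset.mem_univ i)]
  simp only [Pi.add_apply, Pi.single_eq_same, Int.cast_add]
  ring

lemma stepMean_normSq (hd : 0 < d) (x : Pt d) : stepMean normSq x = normSq x + 1 := by
  have : ((2 * d : ℕ) : ℝ) ≠ 0 := by positivity
  rw [stepMean_apply, sum_dir fun e => normSq (x + e), div_eq_iff this]
  simp only [normSq_add_single, Int.cast_one, Int.cast_neg]
  rw [Finset.sum_congr rfl fun i _ => show _ = 2 * (normSq x + 1) by ring, Finset.sum_const,
    Finset.card_univ, Fintype.card_fin, nsmul_eq_mul]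
  push_cast
  ring

lemma escProb_nonpos_of_finite (hd : 0 < d) {C : Set (Pt d)} (hCfin : C.Finite)
    (hC : ∀ p ∈ C, ∀ y, latAdj d p y → y ∉ A → y ∈ C) (hp : p ∈ C) : escProb A p ≤ 0 := by
  obtain ⟨K, hK⟩ : BddAbove ((fun q : Pt d × Dir d => normSq (q.1 + q.2.1)) '' C ×ˢ Set.univ) :=
    ((hCfin.prod Set.finite_univ).image _).bddAbove
  have h_time (T : ℕ) : ∑ t ∈ Finset.range T, avoidProb A t p ≤ K - normSq p := by
    refine sum_avoidProb_le (f := (fun _ => K) - normSq) hC (fun q hq y hy => ?_) (fun q _ => ?_)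
      T hp
    · have := hK ⟨(q, ⟨y - q, latAdj_iff_sub_mem_dir.1 hy⟩), ⟨hq, Set.mem_univ _⟩, rfl⟩
      simpa using this
    · rw [map_sub, Pi.sub_apply, stepMean_const hd, stepMean_normSq hd, Pi.sub_apply]
      linarith
  by_contra! h
  obtain ⟨T, hT⟩ := exists_nat_gt ((K - normSq p) / escProb A p)
  have : T * escProb A p ≤ ∑ t ∈ Finset.range T, avoidProb A t p := by
    simpa using Finset.card_nsmul_le_sum (Finset.range T) (fun t => avoidProb A t p) _
      fun t _ => escProb_le_avoidProb A t p
  rw [div_lt_iff₀ h] at hT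
  linarith [h_time T]

lemma Exterior.of_escProb_pos (hd : 2 ≤ d) (h : 0 < escProb (W : Set (Pt d)) p) :
    Exterior W p := by
  by_contra hp
  have h_confined : {q | Reach W p q} ⊆ Set.univ.pi fun i => (fun w : Pt d => w i) '' W := by
    intro q hq i _
    by_contra! hne
    exact hp (.of_reach hq (.of_ne hd i fun w hw hwq => hne ⟨w, hw, hwq⟩))
  have h_finite := (Set.Finite.pi' fun i => W.finite_toSet.image fun w : Pt d => w i).subset
    fun q hq i => h_confined hq i (Set.mem_univ i)
  exact h.not_ge (escProb_nonpos_of_finite (by omega) h_finite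
    (fun q hq y hy hyW => hq.tail ⟨hyW, hy⟩) .refl)

/-! ### Transience -/

lemma rpow_neg_quarter_pow_four (ht : 0 ≤ t) : (t ^ (-(1 / 4) : ℝ)) ^ 4 = t⁻¹ := by
  rw [← Real.rpow_mul_natCast ht, ← Real.rpow_neg_one]
  norm_num

lemma one_add_rpow_neg_quarter_le (hu : |u| ≤ 1 / 8) :
    (1 + u) ^ (-(1 / 4) : ℝ) ≤ 1 - u / 4 + 3 / 16 * u ^ 2 := by
  obtain ⟨h₁, h₂⟩ := abs_le.1 hu
  refine le_of_pow_le_pow_left₀ four_ne_zero (by nlinarith) ?_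
  rw [rpow_neg_quarter_pow_four (by linarith), inv_le_iff_one_le_mul₀ (by linarith)]
  nlinarith [mul_nonneg (sq_nonneg u) (sub_nonneg.2 h₂), sq_nonneg (u ^ 2), sq_nonneg (u ^ 3),
    sq_nonneg (u ^ 4)]

lemma add_rpow_neg_quarter_add_sub_le (hM : 0 < M) (hv : |v| ≤ M / 8) :
    (M + v) ^ (-(1 / 4) : ℝ) + (M - v) ^ (-(1 / 4) : ℝ) ≤
      M ^ (-(1 / 4) : ℝ) * (2 + 3 / 8 * (v / M) ^ 2) := by
  have hu : |v / M| ≤ 1 / 8 := by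
    rw [abs_div, abs_of_pos hM, div_le_iff₀ hM]
    linarith
  have h_pos : 0 ≤ 1 + v / M ∧ 0 ≤ 1 + -(v / M) := by
    constructor <;> linarith [abs_le.1 hu]
  have h_add : M + v = M * (1 + v / M) := by field_simp
  have h_sub : M - v = M * (1 + -(v / M)) := by field_simp; ring
  rw [h_add, h_sub, Real.mul_rpow hM.le h_pos.1, Real.mul_rpow hM.le h_pos.2, ← mul_add]
  refine mul_le_mul_of_nonneg_left ?_ (Real.rpow_nonneg hM.le _)
  linarith [one_add_rpow_neg_quarter_le hu, one_add_rpow_neg_quarter_le ((abs_neg _).trans_le hu)]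

lemma rpow_neg_quarter_mul_le (hM : 1 < M) :
    M ^ (-(1 / 4) : ℝ) * (1 + 1 / (4 * M)) ≤ (M - 1) ^ (-(1 / 4) : ℝ) := by
  have hM₁ : 0 < M - 1 := sub_pos.2 hM
  have h_poly : (M - 1) * (4 * M + 1) ^ 4 ≤ M * (4 * M) ^ 4 := by
    have : 0 ≤ 160 * M ^ 3 + 80 * M ^ 2 + 15 * M + 1 := by positivity
    linear_combination this
  refine le_of_pow_le_pow_left₀ four_ne_zero (by positivity) ?_
  rw [mul_pow, rpow_neg_quarter_pow_four (by linarith), rpow_neg_quarter_pow_four hM₁.le,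
    le_inv_comm₀ (by positivity) hM₁]
  calc M - 1 ≤ M * (4 * M) ^ 4 / (4 * M + 1) ^ 4 := (le_div_iff₀ (by positivity)).2 h_poly
    _ = (M⁻¹ * (1 + 1 / (4 * M)) ^ 4)⁻¹ := by field_simp

/-- A positive superharmonic function that vanishes at infinity. The small exponent leaves enough
room for the error of the second-order expansion, which the constant `63` keeps valid
everywhere. -/
noncomputable def barrier (x : Pt d) : ℝ := (normSq x + 63) ^ (-(1 / 4) : ℝ)

lemma barrier_pos (x : Pt d) : 0 < barrier x :=
  Real.rpow_pos_of_pos (by linarith [normSq_nonneg x]) _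

lemma stepMean_barrier_le (hd : 3 ≤ d) : stepMean barrier ≤ (barrier : Pt d → ℝ) := by
  intro x
  set M := normSq x + 64 with hM
  have hM_pos : 0 < M := by linarith [normSq_nonneg x]
  have hd' : (3 : ℝ) ≤ d := by exact_mod_cast hd
  have h_pair (i : Fin d) : barrier (x + Pi.single i 1) + barrier (x + Pi.single i (-1)) ≤
      M ^ (-(1 / 4) : ℝ) * (2 + 3 / 8 * (2 * x i / M) ^ 2) := by
    have h_small : |2 * (x i : ℝ)| ≤ M / 8 := by
      rw [abs_mul, abs_two]
      nlinarith [sq_le_normSq x i, sq_abs (x i : ℝ), sq_nonneg (|(x i : ℝ)| - 8)]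
    refine le_of_eq_of_le ?_ (add_rpow_neg_quarter_add_sub_le hM_pos h_small)
    simp only [barrier, normSq_add_single, hM]
    push_cast
    ring_nf
  have h_sum : ∑ i, (2 + 3 / 8 * (2 * x i / M) ^ 2) = 2 * d + 3 / 2 * normSq x / M ^ 2 := by
    simp only [div_pow, mul_pow, Finset.sum_add_distrib, ← Finset.mul_sum, ← Finset.sum_div, normSq]
    simp
    ring
  rw [stepMean_apply, sum_dir fun e => barrier (x + e), div_le_iff₀ (by positivity)]
  calc _ ≤ M ^ (-(1 / 4) : ℝ) * (2 * d + 3 / 2 * normSq x / M ^ 2) := by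
        rw [← h_sum, Finset.mul_sum]
        exact Finset.sum_le_sum fun i _ => h_pair i
    _ ≤ M ^ (-(1 / 4) : ℝ) * (1 + 1 / (4 * M)) * (2 * d) := by
        rw [mul_assoc]
        gcongr
        have : 3 / 2 * normSq x / M ^ 2 ≤ d / (2 * M) := by
          rw [div_le_div_iff₀ (by positivity) (by positivity)]
          nlinarith [normSq_nonneg x]
        refine (add_le_add_right this _).trans_eq ?_
        field_simp
        ring
    _ ≤ (M - 1) ^ (-(1 / 4) : ℝ) * (2 * d) := by
        gcongr
        exact rpow_neg_quarter_mul_le (by linarith [normSq_nonneg x])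
    _ = barrier x * (2 * d : ℕ) := by
        rw [barrier, hM]
        push_cast
        ring_nf

lemma exists_mul_barrier_le_half (d : ℕ) (c : ℝ) :
    ∃ r : ℤ, ∀ (z : Pt d) (i : Fin d), r ≤ z i → c * barrier z ≤ 1 / 2 := by
  have h_lim : Filter.Tendsto (fun t : ℝ => c * t ^ (-(1 / 4) : ℝ)) .atTop (nhds 0) := by
    simpa using (tendsto_rpow_neg_atTop (by norm_num : (0 : ℝ) < 1 / 4)).const_mul c
  obtain ⟨R, hR⟩ := Filter.eventually_atTop.1 (h_lim.eventually_le_const one_half_pos)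
  refine ⟨⌈R⌉, fun z i hz => hR _ ?_⟩
  have := Int.ceil_le.1 hz
  nlinarith [sq_le_normSq z i, sq_nonneg ((z i : ℝ) - 1)]

lemma exists_escProb_pos (hd : 3 ≤ d) (W : Conf d) :
    ∃ r : ℤ, ∀ (z : Pt d) (i : Fin d), r ≤ z i → 0 < escProb (W : Set (Pt d)) z := by
  obtain ⟨r, hr⟩ := exists_mul_barrier_le_half d (∑ w ∈ W, (barrier w)⁻¹)
  refine ⟨r, fun z i hz => (one_half_pos (α := ℝ)).trans_le (le_ciInf fun T => ?_)⟩
  have h_nonneg : 0 ≤ ∑ w ∈ W, (barrier w)⁻¹ :=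
    Finset.sum_nonneg fun w _ => (inv_pos.2 (barrier_pos w)).le
  have := one_sub_avoidProb_le (f := (∑ w ∈ W, (barrier w)⁻¹) • barrier) (by omega)
    (smul_nonneg h_nonneg fun x => (barrier_pos x).le)
    (by rw [map_smul]; exact smul_le_smul_of_nonneg_left (stepMean_barrier_le hd) h_nonneg)
    (fun w (hw : w ∈ W) => ?_) T z
  · have := hr z i hz
    simp only [Pi.smul_apply, smul_eq_mul] at *
    linarith
  · rw [Pi.smul_apply, smul_eq_mul, ← inv_mul_cancel₀ (barrier_pos w).ne']
    gcongr
    · exact (barrier_pos w).le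
    · exact Finset.single_le_sum (f := fun w => (barrier w)⁻¹)
        (fun w _ => (inv_pos.2 (barrier_pos w)).le) hw

lemma Exterior.escProb_pos (hd : 3 ≤ d) (h : Exterior W x) :
    0 < escProb (↑(insert x W) : Set (Pt d)) x := by
  obtain ⟨r, hr⟩ := exists_escProb_pos hd (insert x W)
  obtain ⟨z, i, hxz, hz⟩ := h.exists_high r
  by_contra hx
  suffices ∀ p, Reach W p z → 0 < escProb (↑(insert x W) : Set (Pt d)) p from hx (this x hxz)
  intro p hp
  induction hp using Relation.ReflTransGen.head_induction_on with
  | refl => exact hr z i hz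
  | @head a c hac _ ih =>
    refine escProb_pos_of_adj (by omega) hac.2 (fun hc => ?_) ih
    obtain rfl | hcW := Finset.mem_insert.1 (Finset.mem_coe.1 hc)
    exacts [hx ih, hac.1 hcW]

end Walk

section Transitions

variable {d : ℕ} {U V W : Conf d} {w x y : Pt d} {A : Set (Pt d)}

/-! ### Hitting probabilities -/

/-- The probability that the walk started at `x` first hits `A` at time `t`. -/
noncomputable def hitProb (A : Set (Pt d)) (t : ℕ) (x : Pt d) : ℝ :=
  prob d t fun s => 1 ≤ t ∧ wpos d x s t ∈ A ∧ ∀ u, 1 ≤ u → u < t → wpos d x s u ∉ A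

lemma hitProb_nonneg (A : Set (Pt d)) (t : ℕ) (x : Pt d) : 0 ≤ hitProb A t x := prob_nonneg _ _ _

lemma hitProb_one (A : Set (Pt d)) : hitProb A 1 = stepMean (A.indicator fun _ => 1) := by
  funext x
  unfold hitProb
  simp only [prob_succ, stepMean_apply, wpos_cons, wpos_zero]
  congr 1
  refine Finset.sum_congr rfl fun e _ => ?_
  by_cases h : x + (e : Pt d) ∈ A
  · rw [Set.indicator_of_mem h]
    exact prob_zero fun _ => ⟨le_rfl, h, fun u _ _ => by omega⟩
  · simp [h, prob_false]

lemma hitProb_add_two (A : Set (Pt d)) (t : ℕ) :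
    hitProb A (t + 2) = stepMean (Aᶜ.indicator (hitProb A (t + 1))) := by
  funext x
  unfold hitProb
  simp only [prob_succ _, stepMean_apply, wpos_cons, avoids_cons]
  congr 1
  refine Finset.sum_congr rfl fun e _ => ?_
  by_cases h : x + (e : Pt d) ∈ A
  · simp [h, prob_false]
  · simp [h]

lemma hitProb_succ (hd : 0 < d) (A : Set (Pt d)) (t : ℕ) :
    hitProb A (t + 1) = avoidProb A t - avoidProb A (t + 1) := by
  induction t with
  | zero =>
    have h_zero : avoidProb A 0 = fun _ => 1 := funext (avoidProb_zero A)
    have h_mean : stepMean (fun _ : Pt d => (1 : ℝ)) = fun _ => 1 :=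
      funext (stepMean_const hd 1)
    rw [zero_add, hitProb_one, avoidProb_succ, h_zero, ← h_mean, ← map_sub, h_mean,
      ← Set.indicator_compl, compl_compl]
  | succ t ih =>
    rw [hitProb_add_two, ih, Set.indicator_sub', map_sub, ← avoidProb_succ, ← avoidProb_succ]

lemma summable_hitProb (hd : 0 < d) (A : Set (Pt d)) (x : Pt d) :
    Summable fun t => hitProb A t x := by
  refine (summable_nat_add_iff 1).1 (summable_of_sum_range_le (c := 1)
    (fun t => hitProb_nonneg A _ x) fun T => ?_)
  simp only [hitProb_succ hd, Pi.sub_apply]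
  rw [Finset.sum_range_sub', avoidProb_zero]
  exact sub_le_self _ (avoidProb_nonneg A T x)

/-- The probability that the walk started at `x` first hits `A` at time `t`, coming from `y`. -/
noncomputable def hitFromProb (A : Set (Pt d)) (t : ℕ) (x y : Pt d) : ℝ :=
  prob d t fun s => 1 ≤ t ∧ wpos d x s t ∈ A ∧ wpos d x s (t - 1) = y ∧
    ∀ u, 1 ≤ u → u < t → wpos d x s u ∉ A

lemma hitFromProb_le_hitProb (A : Set (Pt d)) (t : ℕ) (x y : Pt d) :
    hitFromProb A t x y ≤ hitProb A t x :=
  prob_mono fun _ hs => ⟨hs.1, hs.2.1, hs.2.2.2⟩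

lemma hitFromProb_one_pos (hw : w ∈ A) (hyw : latAdj d y w) : 0 < hitFromProb A 1 y y := by
  refine prob_succ_pos ⟨w - y, latAdj_iff_sub_mem_dir.1 hyw⟩ (one_pos.trans_eq (prob_zero ?_).symm)
  refine fun s => ⟨le_rfl, ?_, wpos_zero _ _, fun u _ _ => by omega⟩
  rwa [wpos_cons, wpos_zero, add_sub_cancel]

lemma hitFromProb_add_two_pos {z : Pt d} {t : ℕ} (hxz : latAdj d x z) (hz : z ∉ A)
    (h : 0 < hitFromProb A (t + 1) z y) : 0 < hitFromProb A (t + 2) x y := by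
  refine prob_succ_pos ⟨z - x, latAdj_iff_sub_mem_dir.1 hxz⟩ (h.trans_le (prob_mono fun s hs => ?_))
  obtain ⟨-, h_hit, h_from, h_avoid⟩ := hs
  rw [avoids_cons, wpos_cons, show t + 2 - 1 = t + 1 from rfl, wpos_cons, add_sub_cancel]
  exact ⟨by omega, h_hit, h_from, hz, h_avoid⟩

lemma exists_hitFromProb_pos (h : Reach W x y) (hw : w ∈ W) (hyw : latAdj d y w) :
    ∃ t, 0 < hitFromProb (W : Set (Pt d)) (t + 1) x y := by
  induction h using Relation.ReflTransGen.head_induction_on with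
  | refl => exact ⟨0, hitFromProb_one_pos hw hyw⟩
  | head hs _ ih => exact ih.imp' (· + 1) fun t => hitFromProb_add_two_pos hs.2 hs.1

lemma hitFrom_nonneg (A : Set (Pt d)) (x y : Pt d) : 0 ≤ hitFrom d A x y :=
  tsum_nonneg fun _ => prob_nonneg _ _ _

lemma retProb_nonneg (A : Set (Pt d)) (x : Pt d) : 0 ≤ retProb d A x :=
  tsum_nonneg fun _ => prob_nonneg _ _ _

lemma transP_pos (hd : 0 < d) (h : Reach W x y) (hw : w ∈ W) (hyw : latAdj d y w) :
    0 < transP d W x y := by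
  obtain ⟨t, ht⟩ := exists_hitFromProb_pos h hw hyw
  have h_ret := summable_hitProb hd (W : Set (Pt d)) x
  have h_hit : Summable fun t => hitFromProb (W : Set (Pt d)) t x y :=
    .of_nonneg_of_le (fun t => prob_nonneg _ _ _) (fun t => hitFromProb_le_hitProb _ _ _ _) h_ret
  exact div_pos (h_hit.tsum_pos (fun t => prob_nonneg _ _ _) _ ht)
    (h_ret.tsum_pos (fun t => prob_nonneg _ _ _) _ (ht.trans_le (hitFromProb_le_hitProb _ _ _ _)))

/-! ### Transitions of HAT -/

lemma pHAT_nonneg (U : Conf d) (x y : Pt d) : 0 ≤ pHAT d U x y :=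
  mul_nonneg (div_nonneg (esc_nonneg _ _) (tsum_nonneg fun _ => esc_nonneg _ _))
    (div_nonneg (hitFrom_nonneg _ _ _) (retProb_nonneg _ _))

lemma harm_pos (hx : x ∈ U) (h : 0 < escProb (U : Set (Pt d)) x) : 0 < harm d U x := by
  have hx' : x ∈ (U : Set (Pt d)) := hx
  rw [← esc_of_mem hx'] at h
  exact div_pos h ((hasSum_fintype _).summable.tsum_pos (fun _ => esc_nonneg _ _) ⟨x, hx'⟩ h)

lemma pHAT_insert_pos (hd : 3 ≤ d) (hxW : x ∉ W) (hx : Exterior W x) (hy : y ∈ outerBdry W) :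
    0 < pHAT d (insert x W) x y := by
  obtain ⟨hyW, ⟨w, hw, hyw⟩, hyext⟩ := mem_outerBdry_iff.1 hy
  have h_diff : (↑(insert x W) : Set (Pt d)) \ {x} = W := by
    rw [Finset.coe_insert, Set.insert_sdiff_self_of_notMem (Finset.mem_coe.not.2 hxW)]
  rw [pHAT, h_diff]
  exact mul_pos (harm_pos (Finset.mem_insert_self x W) (hx.escProb_pos hd))
    (transP_pos (by omega) (hx.reach hyext hyW) hw hyw)

lemma HatMove.hatProb_pos (hd : 3 ≤ d) (h : HatMove U V) : 0 < hatProb d U V := by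
  classical
  obtain ⟨W, x, y, hxW, hx, hy, hxy, rfl, rfl⟩ := h
  have h_ne : insert y W ≠ insert x W := fun h => by
    obtain rfl | hyW := Finset.mem_insert.1 (h ▸ Finset.mem_insert_self y W)
    exacts [hxy rfl, (mem_outerBdry_iff.1 hy).1 hyW]
  rw [hatProb, if_neg h_ne]
  have h_nonneg (a b : Pt d) : 0 ≤ if a ∈ insert x W ∧ a ≠ b ∧
      insert y W = insert b ((insert x W).erase a) then pHAT d (insert x W) a b else 0 :=
    ite_nonneg (pHAT_nonneg _ _ _) le_rfl
  refine Summable.tsum_pos ?_ (fun a => tsum_nonneg (h_nonneg a)) x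
    (Summable.tsum_pos ?_ (h_nonneg x) y ?_)
  · refine summable_of_ne_finset_zero (s := insert x W) fun a ha => ?_
    simp only [ha, false_and, if_false, tsum_zero]
  · refine summable_of_ne_finset_zero (s := insert y W) fun b hb => if_neg ?_
    rintro ⟨-, -, h⟩
    exact hb (h ▸ Finset.mem_insert_self _ _)
  · rw [if_pos ⟨Finset.mem_insert_self _ _, hxy, by rw [Finset.erase_insert hxW]⟩]
    exact pHAT_insert_pos hd hxW hx hy

lemma HatReach.exists_trajectory (h : HatReach U V) :
    ∃ (t : ℕ) (u : ℕ → Conf d), u 0 = U ∧ u t = V ∧ ∀ s < t, HatMove (u s) (u (s + 1)) := by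
  induction h using Relation.ReflTransGen.head_induction_on with
  | refl => exact ⟨0, fun _ => V, rfl, rfl, fun s hs => absurd hs s.not_lt_zero⟩
  | @head U U' hs _ ih =>
    obtain ⟨t, u, rfl, hut, hu⟩ := ih
    exact ⟨t + 1, fun s => s.casesOn U u, rfl, hut,
      Nat.rec (fun _ => hs) fun s _ hst => hu s (Nat.lt_of_succ_lt_succ hst)⟩

lemma HatReach.exists_measure_pos (hd : 3 ≤ d) (h : HatReach U V) :
    ∃ t : ℕ, ∀ μ : Measure (ℕ → Conf d), IsHATLaw d U μ → 0 < μ {ω | ω t = V} := by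
  obtain ⟨t, u, hu₀, hut, hu⟩ := h.exists_trajectory
  refine ⟨t, fun μ hμ => ?_⟩
  have h_path : 0 < μ {ω | ∀ s ≤ t, ω s = u s} := by
    rw [hμ.2, if_pos hu₀, one_mul, pos_iff_ne_zero, Finset.prod_ne_zero_iff]
    exact fun s hs => (ENNReal.ofReal_pos.2 ((hu s (Finset.mem_range.1 hs)).hatProb_pos hd)).ne'
  exact h_path.trans_le (measure_mono fun ω hω => (hω t le_rfl).trans hut)

lemma NonIso.exists_mem_outerBdry (hd : 2 ≤ d) (hV : NonIso d V) :
    ∃ x ∈ V, x ∈ outerBdry (V.erase x) := by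
  obtain ⟨x, hx, hx_esc, y, hy, hxy⟩ := hV
  refine ⟨x, hx, mem_outerBdry_iff.2 ⟨Finset.notMem_erase x V,
    ⟨y, Finset.mem_erase.2 ⟨hxy.ne.symm, hy⟩, hxy⟩, .of_escProb_pos hd ?_⟩⟩
  rw [esc_of_mem (Finset.mem_coe.2 hx)] at hx_esc
  exact hx_esc.trans_le (escProb_anti (Finset.coe_subset.2 (V.erase_subset x)) x)

lemma symEq_refl (U : Conf d) : SymEq d U U := by
  refine ⟨1, fun _ => 1, 0, fun _ => Or.inl rfl, ?_⟩
  have : SymImage d 1 (fun _ => 1) 0 = id := by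
    funext p i
    simp [SymImage]
  rw [this, Finset.image_id]

end Transitions

theorem hat_irreducible_general (d : ℕ) (hd : 3 ≤ d) (U V : Conf d) (hUV : U.card = V.card)
    (hV : NonIso d V) :
    ∃ t : ℕ, ∀ μ : Measure (ℕ → Conf d), IsHATLaw d U μ → 0 < μ {ω | ω t = V} := by
  obtain ⟨x, hxV, hx⟩ := hV.exists_mem_outerBdry (by omega)
  have h_reach : HatReach U (insert x (V.erase x)) :=
    hatReach_insert hd (by rw [hUV, Finset.card_erase_add_one hxV]) hx
  rw [Finset.insert_erase hxV] at h_reach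
  exact h_reach.exists_measure_pos hd

/-- **Irreducibility.** HAT is irreducible on the equivalence classes of non-isolated
`n`-element configurations, for every `d ≥ 5` and `n ≥ 4`. -/
theorem hat_irreducible (d n : ℕ) (hd : 5 ≤ d) (hn : 4 ≤ n)
    (U V : Conf d) (hU : U.card = n) (hV : V.card = n)
    (hUni : NonIso d U) (hVni : NonIso d V) :
    ∃ t : ℕ, ∀ μ : Measure (ℕ → Conf d), IsHATLaw d U μ →
      0 < μ {ω | SymEq d V (ω t)} := by
  obtain ⟨t, ht⟩ := hat_irreducible_general d (by omega) U V (hU.trans hV.symm) hVni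
  exact ⟨t, fun μ hμ => (ht μ hμ).trans_le (measure_mono fun ω (hω : ω t = V) =>
    hω ▸ symEq_refl V)⟩

end HATFormal
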